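/- Let (X,d) be a proper metric space and μ a Borel measure on X with 0 < μ(U) < ∞ for every nonempty bounded open set U ⊆ X. Let x₀ ∈ X, C ≥ K_a, C₀ ≥ 1, and assume (CKN)_C^{x₀}, (VD)^n_{C₀} and (AR)^n_{x₀} hold. Then limsup_{r→∞} μ(B(x₀,r))/(ω_n·r^n) ≥ (K_a/C)^{n/(1-a)}. -/

import Mathlib

/-!
The proof tests the Caffarelli-Kohn-Nirenberg inequality on the Euclidean extremals and compares
the resulting differential inequality with its Euclidean solution.

Put `α = a p`, `σ = 2 - α`, `N = n / (1 - a)` and `ρ = d(x₀, ·)`. The functions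
`u = (λ + ρ ^ σ) ^ (-(n - 2) / σ)`, approximated by Lipschitz functions with compact support
(`CKNineq_radial`), turn `(CKN)` into
`Q ^ (1 - 2 / N) ≤ C² (n - 2)² (P - λ Q)` (`CKN_talenti`), where
`P(λ) = ∫ ρ ^ (-α) (λ + ρ ^ σ) ^ (1 - N) dμ` and `Q(λ)` is the same integral with exponent `-N`.
Since `P' = -(N - 1) Q` (`talenti_integral_hasDerivAt`), this is a differential inequality for `P`.
The same integral over the Euclidean space with its volume multiplied by `b` is a multiple
`b c λ ^ (1 - N / 2)` of a power of `λ`, and it satisfies the reversed inequality as soon as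
`b ≤ (K_a / C) ^ N` (`sharp_constant_ineq`).

By the layer-cake formula, `P` is an average of the volumes of balls around `x₀` at scale
`κ = λ ^ (1 / σ)` (`lintegral_talenti`). Let `b < (K_a / C) ^ N ≤ 1`. The density condition makes
`P` larger than the model for small `λ` (`layer_lower`), so `P` is at least the model for all `λ`
(`ode_comparison`). If the limsup of the volume ratio were below `b`, then, with the bound
`μ (B(x₀, r)) ≤ 2 C₀ ω_n r ^ n` for domination (`volume_upper`), `P` would be smaller than the model
for some large `λ` (`layer_upper`), a contradiction.
-/

open MeasureTheory Filter Topology Metric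

/-- Volume of the unit ball in `ℝ^n`. -/
noncomputable def omegaBall (n : ℕ) : ℝ :=
  Real.pi ^ ((n : ℝ) / 2) / Real.Gamma ((n : ℝ) / 2 + 1)

/-- The sharp Caffarelli-Kohn-Nirenberg constant `K_a` (for `p = 2n/(n-2+2a)`). -/
noncomputable def CKNconst (n : ℕ) (a p : ℝ) : ℝ :=
  (1 / (((n : ℝ) - 2) * ((n : ℝ) - a * p))) ^ ((1 : ℝ) / 2) *
    ((2 - a * p) * Real.Gamma ((2 * (n : ℝ) - 2 * a * p) / (2 - a * p)) /
        ((n : ℝ) * omegaBall n * Real.Gamma (((n : ℝ) - a * p) / (2 - a * p)) ^ 2)) ^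
      ((2 - a * p) / (2 * (n : ℝ) - 2 * a * p))

/-- The local Lipschitz constant `|Du|(x) = limsup_{y → x} |u(y)-u(x)| / d(x,y)`. -/
noncomputable def locLip {X : Type*} [MetricSpace X] (u : X → ℝ) (x : X) : ℝ :=
  Filter.limsup (fun y => |u y - u x| / dist x y) (𝓝[≠] x)

/-- The Caffarelli-Kohn-Nirenberg inequality `(CKN)_C^{x₀}` on a metric measure space:
`(∫_X |u|^p / d(x₀,·)^{ap} dμ)^{1/p} ≤ C (∫_X |Du|² dμ)^{1/2}` for all Lipschitz functions
with compact support. -/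
def CKNineq {X : Type*} [MetricSpace X] [MeasurableSpace X]
    (μ : Measure X) (x₀ : X) (a p C : ℝ) : Prop :=
  ∀ u : X → ℝ, (∃ K : NNReal, LipschitzWith K u) → HasCompactSupport u →
    (∫⁻ x, ENNReal.ofReal (|u x| ^ p / dist x₀ x ^ (a * p)) ∂μ) ^ ((1 : ℝ) / p) ≤
      ENNReal.ofReal C * (∫⁻ x, ENNReal.ofReal (locLip u x ^ 2) ∂μ) ^ ((1 : ℝ) / 2)

/-- The volume condition `(VD)^m_{C₀}`: `μ(B(x,R))/μ(B(x,r)) ≤ C₀ (R/r)^m`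
for all `x` and `0 < r < R`. -/
def VDcond {X : Type*} [MetricSpace X] [MeasurableSpace X]
    (μ : Measure X) (m C₀ : ℝ) : Prop :=
  ∀ x : X, ∀ r R : ℝ, 0 < r → r < R →
    μ (ball x R) ≤ ENNReal.ofReal (C₀ * (R / r) ^ m) * μ (ball x r)

/-- The density condition `(AR)^n_{x₀}`: `liminf_{r → 0} μ(B(x₀,r))/(ω_n r^n) = 1`. -/
def ARcond {X : Type*} [MetricSpace X] [MeasurableSpace X]
    (μ : Measure X) (x₀ : X) (n : ℕ) : Prop :=
  Filter.liminf (fun r : ℝ => (μ (ball x₀ r)).toReal / (omegaBall n * r ^ n)) (𝓝[>] 0) = 1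

/-! ### The layer-cake formula and the Beta integral -/

open Set in
/-- Layer-cake formula for a decreasing radial integrand: if `g r = ∫_r^∞ w`, then
`∫ g ∘ ρ dν = ∫_0^∞ w(s) ν{ρ < s} ds`, by Tonelli. -/
theorem lintegral_radial {Y : Type*} [MeasurableSpace Y] (ν : Measure Y) [SFinite ν]
    (ρ : Y → ℝ) (hρ : Measurable ρ) (hpos : ∀ᵐ y ∂ν, 0 < ρ y) (g w : ℝ → ℝ) (hw : Measurable w)
    (hgw : ∀ r, 0 < r → ∫⁻ s in Ioi r, ENNReal.ofReal (w s) = ENNReal.ofReal (g r)) :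
    ∫⁻ y, ENNReal.ofReal (g (ρ y)) ∂ν =
      ∫⁻ s in Ioi (0 : ℝ), ENNReal.ofReal (w s) * ν {y | ρ y < s} := by
  have h1 : ∫⁻ y, ENNReal.ofReal (g (ρ y)) ∂ν =
      ∫⁻ y, (∫⁻ s in Ioi (0 : ℝ),
        {q : Y × ℝ | ρ q.1 < q.2}.indicator (fun q => ENNReal.ofReal (w q.2)) (y, s)) ∂ν := by
    apply lintegral_congr_ae
    filter_upwards [hpos] with y hy
    rw [← hgw _ hy]
    have : ∀ s, {q : Y × ℝ | ρ q.1 < q.2}.indicator (fun q => ENNReal.ofReal (w q.2)) (y, s)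
        = (Ioi (ρ y)).indicator (fun s => ENNReal.ofReal (w s)) s := fun s => by
      simp [indicator]
    simp_rw [this]
    rw [setLIntegral_indicator measurableSet_Ioi, inter_eq_self_of_subset_left]
    exact Ioi_subset_Ioi hy.le
  have hms : MeasurableSet {q : Y × ℝ | ρ q.1 < q.2} :=
    measurableSet_lt (hρ.comp measurable_fst) measurable_snd
  rw [h1, lintegral_lintegral_swap]
  · apply lintegral_congr
    intro s
    have : ∀ y, {q : Y × ℝ | ρ q.1 < q.2}.indicator (fun q => ENNReal.ofReal (w q.2)) (y, s)
        = {y | ρ y < s}.indicator (fun _ => ENNReal.ofReal (w s)) y := fun y => by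
      simp [indicator]
    simp_rw [this]
    rw [lintegral_indicator_const]
    exact measurableSet_lt hρ measurable_const
  · exact (Measurable.indicator (by fun_prop) hms).aemeasurable

/-- The radial profile `r ^ (-α) (1 + r ^ σ) ^ (1 - N)`. In the application `α = a p`,
`σ = 2 - a p` and `N = n / (1 - a)`. -/
noncomputable def profile (α σ N : ℝ) (r : ℝ) : ℝ := r ^ (-α) * (1 + r ^ σ) ^ (1 - N)

/-- The weight `-d/dr (profile α σ N r)`, against which ball volumes are integrated in the
layer-cake formula. -/
noncomputable def profileWeight (α σ N : ℝ) (r : ℝ) : ℝ :=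
  α * r ^ (-α - 1) * (1 + r ^ σ) ^ (1 - N) +
    (N - 1) * σ * (r ^ (-α) * r ^ (σ - 1) * (1 + r ^ σ) ^ (-N))

theorem profile_hasDerivAt {α σ N r : ℝ} (hr : 0 < r) :
    HasDerivAt (profile α σ N) (-profileWeight α σ N r) r := by
  have h1 : HasDerivAt (fun r : ℝ => r ^ (-α)) (-α * r ^ (-α - 1)) r :=
    Real.hasDerivAt_rpow_const (Or.inl hr.ne')
  have h2 : HasDerivAt (fun r : ℝ => 1 + r ^ σ) (σ * r ^ (σ - 1)) r :=
    (Real.hasDerivAt_rpow_const (Or.inl hr.ne')).const_add 1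
  have hp : 0 < r ^ σ := Real.rpow_pos_of_pos hr _
  have h3 := h2.rpow_const (p := 1 - N) (Or.inl (by positivity))
  refine (h1.mul h3).congr_deriv ?_
  unfold profileWeight
  rw [show 1 - N - 1 = -N by ring]
  ring

theorem profileWeight_nonneg {α σ N r : ℝ} (hα : 0 ≤ α) (hσ : 0 < σ) (hN : 2 < N) (hr : 0 < r) :
    0 ≤ profileWeight α σ N r := by
  have : 0 ≤ N - 1 := by linarith
  unfold profileWeight
  positivity

theorem profileWeight_measurable (α σ N : ℝ) : Measurable (profileWeight α σ N) := by
  unfold profileWeight; fun_prop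

theorem profile_tendsto {α σ N : ℝ} (hα : 0 ≤ α) (hσ : 0 < σ) (hN : 2 < N) :
    Tendsto (profile α σ N) atTop (𝓝 0) := by
  have h2 : Tendsto (fun r : ℝ => (1 + r ^ σ) ^ (1 - N)) atTop (𝓝 0) := by
    have := (tendsto_rpow_neg_atTop (y := N - 1) (by linarith)).comp
      (tendsto_atTop_add_const_left atTop (1 : ℝ) (tendsto_rpow_atTop hσ))
    simpa [Function.comp_def] using this
  refine squeeze_zero' ?_ ?_ h2
  · filter_upwards [eventually_gt_atTop 0] with r hr
    unfold profile; positivity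
  · filter_upwards [eventually_ge_atTop 1] with r hr
    unfold profile
    have : r ^ (-α) ≤ 1 := Real.rpow_le_one_of_one_le_of_nonpos hr (by linarith)
    exact mul_le_of_le_one_left (by positivity) this

open Set in
theorem profileWeight_lintegral {α σ N : ℝ} (hα : 0 ≤ α) (hσ : 0 < σ) (hN : 2 < N) (r : ℝ)
    (hr : 0 < r) :
    ∫⁻ s in Ioi r, ENNReal.ofReal (profileWeight α σ N s) = ENNReal.ofReal (profile α σ N r) := by
  have hd : ∀ x ∈ Ici r, HasDerivAt (profile α σ N) (-profileWeight α σ N x) x :=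
    fun x hx => profile_hasDerivAt (lt_of_lt_of_le hr hx)
  have hneg : ∀ x ∈ Ioi r, -profileWeight α σ N x ≤ 0 :=
    fun x hx => neg_nonpos.2 (profileWeight_nonneg hα hσ hN (hr.trans hx))
  have h1 := integral_Ioi_of_hasDerivAt_of_nonpos' hd hneg (profile_tendsto hα hσ hN)
  have h2 := integrableOn_Ioi_deriv_of_nonpos' hd hneg (profile_tendsto hα hσ hN)
  rw [integral_neg] at h1
  rw [← ofReal_integral_eq_lintegral_ofReal]
  · congr 1; linarith
  · simpa [IntegrableOn] using h2.neg
  · filter_upwards [ae_restrict_mem measurableSet_Ioi] with x hx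
    exact profileWeight_nonneg hα hσ hN (hr.trans hx)

open Set in
/-- Euler's Beta integral in the form `∫_0^∞ t ^ (x - 1) (1 + t) ^ (-(x + y)) dt = B(x, y)`.
It follows by inserting the Gamma integral for `(1 + t) ^ (-(x + y))` and exchanging the order of
integration. -/
theorem lintegral_beta {x y : ℝ} (hx : 0 < x) (hy : 0 < y) :
    ∫⁻ t in Ioi (0 : ℝ), ENNReal.ofReal (t ^ (x - 1) * (1 + t) ^ (-(x + y))) =
      ENNReal.ofReal (Real.Gamma x * Real.Gamma y / Real.Gamma (x + y)) := by
  have gam : ∀ {z c : ℝ}, 0 < z → 0 < c →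
      ∫⁻ s in Ioi (0 : ℝ), ENNReal.ofReal (s ^ (z - 1) * Real.exp (-(c * s))) =
        ENNReal.ofReal (c ^ (-z) * Real.Gamma z) := by
    intro z c hz hc
    have h1 := Real.integral_rpow_mul_exp_neg_mul_Ioi hz hc
    have hne : ∫ s in Ioi (0 : ℝ), s ^ (z - 1) * Real.exp (-(c * s)) ≠ 0 := by
      rw [h1]; have := Real.Gamma_pos_of_pos hz; positivity
    rw [← ofReal_integral_eq_lintegral_ofReal (not_imp_comm.1 integral_undef hne), h1]
    · rw [Real.rpow_neg hc.le, one_div, Real.inv_rpow hc.le]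
    · filter_upwards [ae_restrict_mem measurableSet_Ioi] with s hs
      have : (0 : ℝ) < s := hs
      simp only [Pi.zero_apply]; positivity
  have hG : 0 < Real.Gamma (x + y) := Real.Gamma_pos_of_pos (by positivity)
  have key : ENNReal.ofReal (Real.Gamma (x + y)) *
      ∫⁻ t in Ioi (0 : ℝ), ENNReal.ofReal (t ^ (x - 1) * (1 + t) ^ (-(x + y))) =
      ENNReal.ofReal (Real.Gamma x * Real.Gamma y) := by
    rw [← lintegral_const_mul _ (by fun_prop)]
    calc _ = ∫⁻ t in Ioi (0 : ℝ), ∫⁻ s in Ioi (0 : ℝ), ENNReal.ofReal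
            (t ^ (x - 1) * (s ^ (x + y - 1) * Real.exp (-((1 + t) * s)))) := by
          refine setLIntegral_congr_fun measurableSet_Ioi fun t ht => ?_
          have ht : (0 : ℝ) < t := ht
          simp_rw [ENNReal.ofReal_mul (show 0 ≤ t ^ (x - 1) by positivity)]
          rw [lintegral_const_mul _ (by fun_prop), gam (by positivity) (by positivity),
            mul_left_comm, mul_comm (ENNReal.ofReal (Real.Gamma _)),
            ENNReal.ofReal_mul (by positivity)]
      _ = ∫⁻ s in Ioi (0 : ℝ), ∫⁻ t in Ioi (0 : ℝ), ENNReal.ofReal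
            (t ^ (x - 1) * (s ^ (x + y - 1) * Real.exp (-((1 + t) * s)))) :=
          lintegral_lintegral_swap (by fun_prop)
      _ = ∫⁻ s in Ioi (0 : ℝ), ENNReal.ofReal (Real.Gamma x) *
            ENNReal.ofReal (s ^ (y - 1) * Real.exp (-(1 * s))) := by
          refine setLIntegral_congr_fun measurableSet_Ioi fun s hs => ?_
          have hs : (0 : ℝ) < s := hs
          have : ∀ t, t ^ (x - 1) * (s ^ (x + y - 1) * Real.exp (-((1 + t) * s))) =
              (s ^ (x + y - 1) * Real.exp (-s)) * (t ^ (x - 1) * Real.exp (-(s * t))) := by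
            intro t
            rw [show -((1 + t) * s) = -s + -(s * t) by ring, Real.exp_add]; ring
          simp_rw [this, ENNReal.ofReal_mul
            (show 0 ≤ s ^ (x + y - 1) * Real.exp (-s) by positivity)]
          rw [lintegral_const_mul _ (by fun_prop), gam hx hs,
            ← ENNReal.ofReal_mul (by positivity),
            ← ENNReal.ofReal_mul (Real.Gamma_pos_of_pos hx).le]
          congr 1
          rw [one_mul, show y - 1 = (x + y - 1) + -x by ring, Real.rpow_add hs]; ring
      _ = _ := by
          rw [lintegral_const_mul _ (by fun_prop), gam hy one_pos,
            ← ENNReal.ofReal_mul (Real.Gamma_pos_of_pos hx).le]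
          simp
  rw [ENNReal.ofReal_div_of_pos hG, ← key, ENNReal.eq_div_iff (by simpa using hG) (by simp)]

/-! ### The Euclidean model and the comparison argument -/

open Set in
/-- The value of the layer-cake integral for the model volume function `s ^ n`: it is
`(n / σ) B(N / 2, N / 2 - 1)`. The layer-cake formula for the measure `n y ^ (n - 1) dy` on
`(0, ∞)` and the substitution `t = y ^ σ` reduce it to the Beta integral. -/
theorem lintegral_profile_model {n : ℕ} (hn : 3 ≤ n) {α σ N : ℝ} (hα : 0 ≤ α) (hσ : 0 < σ)
    (hN : 2 < N) (hrel : σ * N = 2 * (n - α)) :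
    ∫⁻ s in Ioi (0 : ℝ), ENNReal.ofReal (profileWeight α σ N s) * ENNReal.ofReal (s ^ n) =
      ENNReal.ofReal
        (n / σ * (Real.Gamma (N / 2) * Real.Gamma (N / 2 - 1) / Real.Gamma (N - 1))) := by
  have hn0 : (0 : ℝ) < n := by exact_mod_cast (by omega : 0 < n)
  set ν : Measure ℝ := (volume.restrict (Ioi (0 : ℝ))).withDensity
    (fun y => ENNReal.ofReal (n * y ^ (n - 1))) with hν
  have hmeas : Measurable (fun y : ℝ => ENNReal.ofReal (n * y ^ (n - 1))) := by fun_prop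
  have hball : ∀ s : ℝ, 0 < s → ν {y | y < s} = ENNReal.ofReal (s ^ n) := by
    intro s hs
    have : {y : ℝ | y < s} = Iio s := rfl
    rw [this, hν, withDensity_apply _ measurableSet_Iio, Measure.restrict_restrict measurableSet_Iio,
      Iio_inter_Ioi, restrict_Ioo_eq_restrict_Ioc, ← ofReal_integral_eq_lintegral_ofReal,
      ← intervalIntegral.integral_of_le hs.le, intervalIntegral.integral_const_mul, integral_pow]
    · congr 1
      have : n - 1 + 1 = n := by omega
      have h2 : ((n - 1 : ℕ) : ℝ) + 1 = n := by exact_mod_cast this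
      rw [this, h2]
      field_simp
      rw [zero_pow (by omega)]; ring
    · exact (Continuous.integrableOn_Ioc (by fun_prop))
    · filter_upwards [ae_restrict_mem measurableSet_Ioc] with x hx
      have := hx.1
      simp only [Pi.zero_apply]; positivity
  have hpos : ∀ᵐ y ∂ν, 0 < (id y : ℝ) :=
    (withDensity_absolutelyContinuous _ _).ae_le (ae_restrict_mem measurableSet_Ioi)
  have key := lintegral_radial ν id measurable_id hpos (profile α σ N) (profileWeight α σ N)
    (profileWeight_measurable α σ N) (profileWeight_lintegral hα hσ hN)
  have h1 : ∫⁻ s in Ioi (0 : ℝ), ENNReal.ofReal (profileWeight α σ N s) * ENNReal.ofReal (s ^ n) =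
      ∫⁻ s in Ioi (0 : ℝ), ENNReal.ofReal (profileWeight α σ N s) * ν {y | id y < s} :=
    setLIntegral_congr_fun measurableSet_Ioi fun s hs => by
      simp only [id]
      rw [hball s hs]
  have hpm : Measurable (profile α σ N) := by unfold profile; fun_prop
  rw [h1, ← key, hν, lintegral_withDensity_eq_lintegral_mul _ hmeas (by fun_prop)]
  have himg : (fun y : ℝ => y ^ σ) '' Ioi 0 = Ioi 0 := by
    ext t
    constructor
    · rintro ⟨y, hy, rfl⟩
      exact Real.rpow_pos_of_pos hy _
    · intro ht
      exact ⟨t ^ σ⁻¹, Real.rpow_pos_of_pos ht _, Real.rpow_inv_rpow (le_of_lt ht) hσ.ne'⟩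
  have hB := lintegral_beta (x := N / 2) (y := N / 2 - 1) (by linarith) (by linarith)
  rw [show N / 2 + (N / 2 - 1) = N - 1 by ring] at hB
  have hcv := lintegral_image_eq_lintegral_deriv_mul_of_monotoneOn (s := Ioi (0 : ℝ))
    (f := fun y : ℝ => y ^ σ) (f' := fun y => σ * y ^ (σ - 1)) measurableSet_Ioi
    (fun y hy => (Real.hasDerivAt_rpow_const (Or.inl (ne_of_gt hy))).hasDerivWithinAt)
    (fun y hy z _ hyz => Real.rpow_le_rpow (le_of_lt hy) hyz hσ.le)
    (fun t => ENNReal.ofReal (t ^ (N / 2 - 1) * (1 + t) ^ (-(N - 1))))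
  rw [himg, hB] at hcv
  rw [ENNReal.ofReal_mul (by positivity), hcv, ← lintegral_const_mul _ (by fun_prop)]
  refine setLIntegral_congr_fun measurableSet_Ioi fun y hy => ?_
  have hy : (0 : ℝ) < y := hy
  simp only [Pi.mul_apply, id]
  rw [← ENNReal.ofReal_mul (by positivity), ← ENNReal.ofReal_mul (by positivity),
    ← ENNReal.ofReal_mul (by positivity)]
  congr 1
  unfold profile
  rw [← Real.rpow_mul hy.le, neg_sub, ← Real.rpow_natCast, Nat.cast_sub (by omega)]
  have e : y ^ ((n : ℝ) - (1 : ℕ)) * y ^ (-α) = y ^ (σ - 1) * y ^ (σ * (N / 2 - 1)) := by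
    rw [← Real.rpow_add hy, ← Real.rpow_add hy]
    congr 1
    push_cast
    linarith
  have e2 : n / σ * σ = n := div_mul_cancel₀ _ hσ.ne'
  linear_combination n * (1 + y ^ σ) ^ (1 - N) * e -
    y ^ (σ - 1) * y ^ (σ * (N / 2 - 1)) * (1 + y ^ σ) ^ (1 - N) * e2

/-- Comparison with the model `H(l) = c l ^ (1 - N / 2)`. The function `P` satisfies
`P' = -(N - 1) Q` together with `Q ^ (1 - 2 / N) ≤ D (P - l Q)`, while `H` satisfies the reversed
inequality by `hc'`. Wherever `P ≤ H`, monotonicity in `Q` forces `Q ≤ Q_H`, so `P - H` is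
nondecreasing there; hence `P` cannot drop below `H` once it lies above it near `0`. -/
theorem ode_comparison {N D c : ℝ} (hN : 2 < N) (hD : 0 < D) (hc : 0 < c) (P Q : ℝ → ℝ)
    (hP : ∀ l, 0 < l → HasDerivAt P (-((N - 1) * Q l)) l)
    (hineq : ∀ l, 0 < l → Q l ^ (1 - 2 / N) ≤ D * (P l - l * Q l))
    (hc' : D * (N / (N - 2)) * (c * ((N / 2 - 1) / (N - 1))) ≤
      (c * ((N / 2 - 1) / (N - 1))) ^ (1 - 2 / N))
    (h0 : ∀ᶠ l in 𝓝[>] (0 : ℝ), c * l ^ (1 - N / 2) < P l) (l : ℝ) (hl : 0 < l) :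
    c * l ^ (1 - N / 2) ≤ P l := by
  set A := c * ((N / 2 - 1) / (N - 1)) with hA
  have hApos : 0 < A := by
    have : 0 < N / 2 - 1 := by linarith
    have : 0 < N - 1 := by linarith
    positivity
  have hcA : c = A * ((N - 1) / (N / 2 - 1)) := by
    rw [hA]
    have h1 : N - 2 ≠ 0 := by linarith
    have h2 : N - 1 ≠ 0 := by linarith
    rw [show N / 2 - 1 = (N - 2) / 2 by ring]
    field_simp
  set H : ℝ → ℝ := fun l => c * l ^ (1 - N / 2) with hH
  set QH : ℝ → ℝ := fun l => A * l ^ (-(N / 2)) with hQH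
  have hHd : ∀ l, 0 < l → HasDerivAt H (-((N - 1) * QH l)) l := by
    intro l hl
    refine ((Real.hasDerivAt_rpow_const (p := 1 - N / 2) (Or.inl hl.ne')).const_mul c).congr_deriv ?_
    rw [hQH, hA]
    have : N - 1 ≠ 0 := by linarith
    rw [show 1 - N / 2 - 1 = -(N / 2) by ring]
    field_simp
    ring
  have hHineq : ∀ l, 0 < l → D * (H l - l * QH l) ≤ QH l ^ (1 - 2 / N) := by
    intro l hl
    have e1 : l ^ (1 - N / 2) = l * l ^ (-(N / 2)) := by
      rw [sub_eq_add_neg, Real.rpow_add hl, Real.rpow_one]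
    have e2 : QH l ^ (1 - 2 / N) = A ^ (1 - 2 / N) * l ^ (1 - N / 2) := by
      rw [hQH]
      simp only
      rw [Real.mul_rpow hApos.le (by positivity), ← Real.rpow_mul hl.le]
      congr 2
      field_simp
      ring
    have e3 : D * (H l - l * QH l) = D * (N / (N - 2)) * A * l ^ (1 - N / 2) := by
      rw [hH, hQH]
      simp only
      rw [hcA, e1]
      have : N - 2 ≠ 0 := by linarith
      have h3 : N / 2 - 1 = (N - 2) / 2 := by ring
      rw [h3]
      field_simp
      ring
    rw [e2, e3]
    gcongr
  -- where `P` lies below `H`, the difference `P - H` is nondecreasing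
  have hmono : ∀ l, 0 < l → P l ≤ H l → Q l ≤ QH l := by
    intro l hl hle
    by_contra! hlt
    have hQHpos : 0 < QH l := by rw [hQH]; positivity
    have hexp : 0 < 1 - 2 / N := by
      rw [sub_pos, div_lt_one (by linarith)]; exact hN
    have h1 := Real.rpow_lt_rpow hQHpos.le hlt hexp
    have h2 := hineq l hl
    have h3 := hHineq l hl
    have h4 : D * (P l - l * Q l) ≤ D * (H l - l * QH l) := by
      apply mul_le_mul_of_nonneg_left _ hD.le
      nlinarith
    linarith
  by_contra! hlt
  change P l < H l at hlt
  obtain ⟨l₁, hl₁, hl₁'⟩ : ∃ l₁, H l₁ < P l₁ ∧ l₁ ∈ Set.Ioo 0 l :=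
    (h0.and (Ioo_mem_nhdsGT hl)).exists
  have hcont : ContinuousOn (fun x => P x - H x) (Set.Icc l₁ l) := fun x hx =>
    ((hP x (hl₁'.1.trans_le hx.1)).sub
      (hHd x (hl₁'.1.trans_le hx.1))).continuousAt.continuousWithinAt
  set S := Set.Icc l₁ l ∩ (fun x => P x - H x) ⁻¹' Set.Ici 0 with hS
  have hSc : IsClosed S := hcont.preimage_isClosed_of_isClosed isClosed_Icc isClosed_Ici
  have hSne : S.Nonempty := ⟨l₁, ⟨le_rfl, hl₁'.2.le⟩, by simp; linarith⟩
  have hSb : BddAbove S := ⟨l, fun x hx => hx.1.2⟩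
  have hm := hSc.csSup_mem hSne hSb
  set m := sSup S with hmdef
  have hm0 : 0 < m := hl₁'.1.trans_le hm.1.1
  have hml : m ≤ l := hm.1.2
  have hbelow : ∀ x ∈ Set.Ioc m l, P x < H x := by
    intro x hx
    by_contra! hge
    have : x ∈ S := ⟨⟨hm.1.1.trans hx.1.le, hx.2⟩, by simpa using hge⟩
    exact absurd (le_csSup hSb this) (not_le.2 hx.1)
  have hM : MonotoneOn (fun x => P x - H x) (Set.Icc m l) := by
    apply monotoneOn_of_deriv_nonneg (convex_Icc m l)
    · exact hcont.mono (Set.Icc_subset_Icc_left hm.1.1)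
    · intro x hx
      rw [interior_Icc] at hx
      exact ((hP x (hm0.trans hx.1)).sub
        (hHd x (hm0.trans hx.1))).differentiableAt.differentiableWithinAt
    · intro x hx
      rw [interior_Icc] at hx
      have hd := (hP x (hm0.trans hx.1)).sub (hHd x (hm0.trans hx.1))
      have : deriv (fun x => P x - H x) x = _ := hd.deriv
      rw [this]
      have := hmono x (hm0.trans hx.1) (hbelow x ⟨hx.1, hx.2.le⟩).le
      nlinarith
  have h1 := hM ⟨le_rfl, hml⟩ ⟨hml, le_rfl⟩ hml
  have h2 : 0 ≤ P m - H m := hm.2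
  simp only at h1
  linarith

/-! ### The inequality for radial functions -/

/-- An infinitesimal Lipschitz bound controls `locLip`. At an isolated point the limsup is
along the bot filter and has the junk value `0`, for which the bound still holds after squaring. -/
theorem locLip_sq_le {X : Type*} [MetricSpace X] {u : X → ℝ} {x : X} {L : ℝ}
    (h : ∀ ε > 0, ∀ᶠ y in 𝓝[≠] x, |u y - u x| ≤ (L + ε) * dist x y) :
    locLip u x ^ 2 ≤ L ^ 2 := by
  unfold locLip
  rcases eq_or_neBot (𝓝[≠] x) with hb | hb
  · rw [hb]
    simp only [limsup, limsSup, map_bot, eventually_bot, Set.ofPred_true, Real.sInf_univ]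
    nlinarith
  · have hup : ∀ ε > 0, ∀ᶠ y in 𝓝[≠] x, |u y - u x| / dist x y ≤ L + ε := by
      intro ε hε
      filter_upwards [h ε hε, self_mem_nhdsWithin] with y hy hne
      rw [div_le_iff₀ (dist_pos.2 (Ne.symm hne))]
      exact hy
    have hge : 0 ≤ limsup (fun y => |u y - u x| / dist x y) (𝓝[≠] x) := by
      apply le_limsup_of_frequently_le
      · exact Eventually.frequently (Eventually.of_forall fun y => by positivity)
      · exact ⟨L + 1, hup 1 one_pos⟩
    have hle : limsup (fun y => |u y - u x| / dist x y) (𝓝[≠] x) ≤ L := by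
      refine le_of_forall_pos_le_add fun ε hε => ?_
      apply limsup_le_of_le _ (hup ε hε)
      exact IsBoundedUnder.isCoboundedUnder_le ⟨0, eventually_map.2
        (Eventually.of_forall fun y => div_nonneg (abs_nonneg _) dist_nonneg)⟩
    gcongr

/-- The inequality `(CKN)` for a decreasing radial function `f ∘ d(x₀, ·)` that is locally
Lipschitz away from `x₀` and vanishes at infinity. The truncations
`max 0 (f (max (1 / (k + 1)) ρ) - f (k + 1))` are Lipschitz with compact support and have local
Lipschitz constant at most `|f' (ρ)|`; Fatou's lemma gives the limit `k → ∞`. -/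
theorem CKNineq_radial {X : Type*} [MetricSpace X] [ProperSpace X] [MeasurableSpace X]
    [BorelSpace X] {μ : Measure X} {x₀ : X} {a p C : ℝ} (hp : 0 < p) (hCKN : CKNineq μ x₀ a p C)
    (hx₀ : ∀ᵐ x ∂μ, 0 < dist x₀ x) (f f' : ℝ → ℝ) (hanti : AntitoneOn f (Set.Ici 0))
    (hf : ∀ r, 0 < r → HasDerivAt f (f' r) r) (hf0 : ∀ r, 0 ≤ r → 0 ≤ f r)
    (hlim : Tendsto f atTop (𝓝 0))
    (hbd : ∀ ε > 0, ∃ K : NNReal, ∀ r ∈ Set.Ici ε, ‖f' r‖₊ ≤ K) :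
    (∫⁻ x, ENNReal.ofReal (f (dist x₀ x) ^ p / dist x₀ x ^ (a * p)) ∂μ) ^ ((1 : ℝ) / p) ≤
      ENNReal.ofReal C * (∫⁻ x, ENNReal.ofReal (f' (dist x₀ x) ^ 2) ∂μ) ^ ((1 : ℝ) / 2) := by
  set u : ℕ → X → ℝ := fun k x =>
    max 0 (f (max ((k : ℝ) + 1)⁻¹ (dist x₀ x)) - f (k + 1)) with hu
  have hε : ∀ k : ℕ, (0 : ℝ) < ((k : ℝ) + 1)⁻¹ := fun k => by positivity
  have hLip : ∀ k, ∃ K : NNReal, LipschitzWith K (u k) := by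
    intro k
    obtain ⟨K, hK⟩ := hbd _ (hε k)
    have h1 : LipschitzOnWith K f (Set.Ici ((k : ℝ) + 1)⁻¹) :=
      (convex_Ici _).lipschitzOnWith_of_nnnorm_hasDerivWithin_le
        (fun r hr => (hf r ((hε k).trans_le hr)).hasDerivWithinAt) hK
    refine ⟨K, LipschitzWith.of_dist_le_mul fun x y => ?_⟩
    have h2 := h1.dist_le_mul (max ((k : ℝ) + 1)⁻¹ (dist x₀ x)) (Set.mem_Ici.2 (le_max_left _ _))
      (max ((k : ℝ) + 1)⁻¹ (dist x₀ y)) (Set.mem_Ici.2 (le_max_left _ _))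
    have h3 : dist (max ((k : ℝ) + 1)⁻¹ (dist x₀ x)) (max ((k : ℝ) + 1)⁻¹ (dist x₀ y))
        ≤ dist x y := by
      rw [Real.dist_eq]
      refine (abs_max_sub_max_le_max _ _ _ _).trans ?_
      simp only [sub_self, abs_zero]
      refine max_le dist_nonneg ?_
      rw [dist_comm x₀ x, dist_comm x₀ y]
      exact abs_dist_sub_le x y x₀
    refine le_trans ?_ (h2.trans (mul_le_mul_of_nonneg_left h3 K.2))
    rw [hu, Real.dist_eq, Real.dist_eq]
    refine (abs_max_sub_max_le_max _ _ _ _).trans ?_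
    simp
  have hsupp : ∀ k, HasCompactSupport (u k) := by
    intro k
    refine HasCompactSupport.intro (isCompact_closedBall x₀ ((k : ℝ) + 1)) fun x hx => ?_
    rw [mem_closedBall, not_le, dist_comm] at hx
    have hk : (0 : ℝ) ≤ (k : ℝ) + 1 := by positivity
    have := hanti (a := (k : ℝ) + 1) (b := max ((k : ℝ) + 1)⁻¹ (dist x₀ x)) hk
      (Set.mem_Ici.2 (le_max_of_le_left (hε k).le)) (le_max_of_le_right hx.le)
    simp only [hu]
    exact max_eq_left (by linarith)
  have hu0 : ∀ k x, 0 ≤ u k x := fun k x => le_max_left _ _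
  have hloc : ∀ k x, 0 < dist x₀ x → locLip (u k) x ^ 2 ≤ f' (dist x₀ x) ^ 2 := by
    intro k x hx
    rw [← sq_abs (f' _)]
    refine locLip_sq_le fun ε hε' => ?_
    have hd := (hf _ hx).isLittleO.def hε'
    have hcont : Tendsto (fun y => dist x₀ y) (𝓝[≠] x) (𝓝 (dist x₀ x)) :=
      (Continuous.tendsto (by fun_prop) x).mono_left nhdsWithin_le_nhds
    filter_upwards [hcont.eventually hd] with y hy
    have h1 : |u k y - u k x| ≤ |f (dist x₀ y) - f (dist x₀ x)| := by
      simp only [hu]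
      refine (abs_max_sub_max_le_max _ _ _ _).trans ?_
      rw [hanti.map_max (Set.mem_Ici.2 (hε k).le) (Set.mem_Ici.2 dist_nonneg),
        hanti.map_max (Set.mem_Ici.2 (hε k).le) (Set.mem_Ici.2 dist_nonneg)]
      simp only [sub_self, abs_zero, sub_sub_sub_cancel_right]
      refine max_le (abs_nonneg _) ((abs_min_sub_min_le_max _ _ _ _).trans ?_)
      simp
    have h2 : |dist x₀ y - dist x₀ x| ≤ dist x y := by
      rw [dist_comm x₀ x, dist_comm x₀ y, dist_comm x y]
      exact abs_dist_sub_le y x x₀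
    simp only [smul_eq_mul, Real.norm_eq_abs] at hy
    have h3 : |f (dist x₀ y) - f (dist x₀ x)| ≤
        |f (dist x₀ y) - f (dist x₀ x) - (dist x₀ y - dist x₀ x) * f' (dist x₀ x)| +
          |(dist x₀ y - dist x₀ x) * f' (dist x₀ x)| := by
      have := abs_add_le (f (dist x₀ y) - f (dist x₀ x) -
        (dist x₀ y - dist x₀ x) * f' (dist x₀ x)) ((dist x₀ y - dist x₀ x) * f' (dist x₀ x))
      rwa [sub_add_cancel] at this
    rw [abs_mul] at h3
    calc |u k y - u k x| ≤ (|f' (dist x₀ x)| + ε) * |dist x₀ y - dist x₀ x| := by linarith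
      _ ≤ _ := by gcongr
  have hconv : ∀ x, 0 < dist x₀ x → Tendsto (fun k => u k x) atTop (𝓝 (f (dist x₀ x))) := by
    intro x hx
    have h1 : Tendsto (fun k : ℕ => max 0 (f (dist x₀ x) - f ((k : ℝ) + 1))) atTop
        (𝓝 (max 0 (f (dist x₀ x) - 0))) := by
      refine tendsto_const_nhds.max (tendsto_const_nhds.sub (hlim.comp ?_))
      exact tendsto_atTop_add_const_right _ _ tendsto_natCast_atTop_atTop
    rw [sub_zero, max_eq_right (hf0 _ hx.le)] at h1
    refine h1.congr' ?_
    have h2 : Tendsto (fun k : ℕ => ((k : ℝ) + 1)⁻¹) atTop (𝓝 0) := by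
      simpa using tendsto_one_div_add_atTop_nhds_zero_nat (𝕜 := ℝ)
    filter_upwards [h2.eventually_lt_const hx] with k hk
    simp only [hu]
    rw [max_eq_right hk.le]
  set R := ENNReal.ofReal C * (∫⁻ x, ENNReal.ofReal (f' (dist x₀ x) ^ 2) ∂μ) ^ ((1 : ℝ) / 2)
  have hk : ∀ k, ∫⁻ x, ENNReal.ofReal (|u k x| ^ p / dist x₀ x ^ (a * p)) ∂μ ≤ R ^ p := by
    intro k
    have h1 := hCKN (u k) (hLip k) (hsupp k)
    have h2 : (∫⁻ x, ENNReal.ofReal (|u k x| ^ p / dist x₀ x ^ (a * p)) ∂μ) ^ ((1 : ℝ) / p) ≤ R := by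
      refine h1.trans ?_
      refine mul_le_mul_right (ENNReal.rpow_le_rpow (lintegral_mono_ae ?_) (by norm_num)) _
      filter_upwards [hx₀] with x hx
      exact ENNReal.ofReal_le_ofReal (hloc k x hx)
    rw [one_div] at h2
    exact (ENNReal.rpow_inv_le_iff hp).1 h2
  rw [one_div, ENNReal.rpow_inv_le_iff hp]
  have hmeas : ∀ k, Measurable
      (fun x => ENNReal.ofReal (|u k x| ^ p / dist x₀ x ^ (a * p))) := by
    intro k
    obtain ⟨K, hK⟩ := hLip k
    have := hK.continuous.measurable
    fun_prop
  calc _ = ∫⁻ x, liminf (fun k => ENNReal.ofReal (|u k x| ^ p / dist x₀ x ^ (a * p))) atTop ∂μ := by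
        apply lintegral_congr_ae
        filter_upwards [hx₀] with x hx
        symm
        apply Tendsto.liminf_eq
        refine (ENNReal.continuous_ofReal.tendsto _).comp (Tendsto.div_const ?_ _)
        simp_rw [abs_of_nonneg (hu0 _ x)]
        exact (hconv x hx).rpow_const (Or.inr hp.le)
    _ ≤ liminf (fun k => ∫⁻ x, ENNReal.ofReal (|u k x| ^ p / dist x₀ x ^ (a * p)) ∂μ) atTop :=
        lintegral_liminf_le hmeas
    _ ≤ R ^ p := by
        refine liminf_le_of_le (by isBoundedDefault) fun b hb => ?_
        obtain ⟨k, hk'⟩ := hb.exists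
        exact hk'.trans (hk k)

/-! ### The extremal functions -/

/-- The radial integrand `r ^ (-α) (l + r ^ σ) ^ e`, built from the extremal functions
`(l + r ^ σ) ^ (-s)` of the Euclidean inequality. -/
noncomputable def talenti (α σ : ℝ) (e l r : ℝ) : ℝ := r ^ (-α) * (l + r ^ σ) ^ e

theorem talenti_nonneg {α σ e l r : ℝ} (hl : 0 < l) (hr : 0 ≤ r) : 0 ≤ talenti α σ e l r := by
  unfold talenti; positivity

theorem talenti_measurable (α σ e l : ℝ) : Measurable (talenti α σ e l) := by
  unfold talenti; fun_prop

theorem talenti_one_sub {α σ N l r : ℝ} (hl : 0 < l) (hr : 0 ≤ r) :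
    talenti α σ (1 - N) l r = (l + r ^ σ) * talenti α σ (-N) l r := by
  unfold talenti
  have : 0 < l + r ^ σ := by positivity
  rw [sub_eq_add_neg, Real.rpow_add this, Real.rpow_one]; ring

theorem talenti_scale {α σ e κ r : ℝ} (hκ : 0 < κ) (hr : 0 ≤ r) :
    talenti α σ e (κ ^ σ) r = κ ^ (-α + σ * e) * talenti α σ e 1 (r / κ) := by
  unfold talenti
  have h1 : r ^ σ = κ ^ σ * (r / κ) ^ σ := by
    rw [← Real.mul_rpow hκ.le (by positivity), mul_div_cancel₀ _ hκ.ne']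
  have h2 : r ^ (-α) = κ ^ (-α) * (r / κ) ^ (-α) := by
    rw [← Real.mul_rpow hκ.le (by positivity), mul_div_cancel₀ _ hκ.ne']
  rw [h1, h2, show κ ^ σ + κ ^ σ * (r / κ) ^ σ = κ ^ σ * (1 + (r / κ) ^ σ) by ring,
    Real.mul_rpow (by positivity) (by positivity), Real.rpow_add hκ, ← Real.rpow_mul hκ.le]
  ring

theorem talenti_integrable_neg {X : Type*} [MetricSpace X] [MeasurableSpace X] [BorelSpace X]
    {μ : Measure X} {x₀ : X} {α σ N l : ℝ} (hl : 0 < l)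
    (hint : Integrable (fun x => talenti α σ (1 - N) l (dist x₀ x)) μ) :
    Integrable (fun x => talenti α σ (-N) l (dist x₀ x)) μ := by
  refine (hint.const_mul l⁻¹).mono'
    ((talenti_measurable α σ (-N) l).comp (by fun_prop)).aestronglyMeasurable
    (Eventually.of_forall fun x => ?_)
  have h0 := talenti_nonneg (α := α) (σ := σ) (e := -N) hl (dist_nonneg (x := x₀) (y := x))
  rw [Real.norm_of_nonneg h0, talenti_one_sub hl dist_nonneg]
  have : (0 : ℝ) ≤ dist x₀ x ^ σ := by positivity
  rw [← mul_assoc]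
  apply le_mul_of_one_le_left h0
  rw [inv_mul_eq_div, one_le_div hl]
  linarith

/-- With `P(l) = ∫ ρ ^ (-α) (l + ρ ^ σ) ^ (1 - N)` and `Q(l)` the same integral with exponent
`-N`, where `ρ = d(x₀, ·)`, one has `P' = -(N - 1) Q`. -/
theorem talenti_integral_hasDerivAt {X : Type*} [MetricSpace X] [MeasurableSpace X] [BorelSpace X]
    {μ : Measure X} {x₀ : X} {α σ N : ℝ} (hN : 2 < N)
    (hint : ∀ l, 0 < l → Integrable (fun x => talenti α σ (1 - N) l (dist x₀ x)) μ)
    (l : ℝ) (hl : 0 < l) :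
    HasDerivAt (fun l => ∫ x, talenti α σ (1 - N) l (dist x₀ x) ∂μ)
      (-((N - 1) * ∫ x, talenti α σ (-N) l (dist x₀ x) ∂μ)) l := by
  have hl2 : 0 < l / 2 := by linarith
  have key := hasDerivAt_integral_of_dominated_loc_of_deriv_le (μ := μ) (𝕜 := ℝ)
    (F := fun l x => talenti α σ (1 - N) l (dist x₀ x))
    (F' := fun l x => -((N - 1) * talenti α σ (-N) l (dist x₀ x)))
    (bound := fun x => (N - 1) * talenti α σ (-N) (l / 2) (dist x₀ x))
    (x₀ := l) (s := Set.Ioi (l / 2)) (Ioi_mem_nhds (by linarith))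
    (Eventually.of_forall fun l =>
      ((talenti_measurable α σ (1 - N) l).comp (by fun_prop)).aestronglyMeasurable)
    (hint l hl)
    (((talenti_measurable α σ (-N) l).comp (by fun_prop)).const_mul _).neg.aestronglyMeasurable
    (Eventually.of_forall fun x t ht => ?_)
    ((talenti_integrable_neg hl2 (hint _ hl2)).const_mul _)
    (Eventually.of_forall fun x t ht => ?_)
  · have h2 := key.2
    rw [integral_neg, integral_const_mul] at h2
    exact h2
  · have ht : l / 2 < t := ht
    have h0 := talenti_nonneg (α := α) (σ := σ) (e := -N) (hl2.trans ht)
      (dist_nonneg (x := x₀) (y := x))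
    have hN1 : 0 ≤ N - 1 := by linarith
    rw [norm_neg, Real.norm_of_nonneg (by positivity)]
    unfold talenti
    have hr : (0 : ℝ) ≤ dist x₀ x ^ σ := by positivity
    gcongr ?_ * (?_ * ?_)
    exact Real.rpow_le_rpow_of_nonpos (by linarith) (by linarith) (by linarith)
  · have ht : l / 2 < t := ht
    have hr : (0 : ℝ) ≤ dist x₀ x ^ σ := by positivity
    have h1 : HasDerivAt (fun t : ℝ => t + dist x₀ x ^ σ) 1 t := (hasDerivAt_id t).add_const _
    have h2 := (h1.rpow_const (p := 1 - N) (Or.inl (by linarith))).const_mul (dist x₀ x ^ (-α))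
    refine h2.congr_deriv ?_
    unfold talenti
    rw [show 1 - N - 1 = -N by ring]; ring

/-- The inequality `(CKN)` for `u = (l + ρ ^ σ) ^ (-s)`, `ρ = d(x₀, ·)`, written in terms of `P`
and `Q`: the left-hand side is a power of `Q`, and `∫ |Du|² = d² (P - l Q)` because
`|Du|² = d² ρ ^ (σ - α) (l + ρ ^ σ) ^ (-N)`. -/
theorem CKN_talenti {X : Type*} [MetricSpace X] [ProperSpace X] [MeasurableSpace X]
    [BorelSpace X] {μ : Measure X} {x₀ : X} {a p C d σ N s : ℝ} (hp : 0 < p) (hC : 0 < C)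
    (hCKN : CKNineq μ x₀ a p C) (hx₀ : ∀ᵐ x ∂μ, 0 < dist x₀ x)
    (hσ : 0 < σ) (hs : 0 < s) (hα : a * p = 2 - σ) (hsd : s * σ = d) (hsp : s * p = N)
    (hs2 : 2 * s + 2 = N) (l : ℝ) (hl : 0 < l)
    (hint : Integrable (fun x => talenti (a * p) σ (1 - N) l (dist x₀ x)) μ) :
    (∫ x, talenti (a * p) σ (-N) l (dist x₀ x) ∂μ) ^ (2 / p) ≤
      C ^ 2 * d ^ 2 * ((∫ x, talenti (a * p) σ (1 - N) l (dist x₀ x) ∂μ) -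
        l * ∫ x, talenti (a * p) σ (-N) l (dist x₀ x) ∂μ) := by
  have hintN := talenti_integrable_neg hl hint
  have hder : ∀ r : ℝ, 0 < r → HasDerivAt (fun r : ℝ => (l + r ^ σ) ^ (-s))
      (-(d * r ^ (σ - 1) * (l + r ^ σ) ^ (-s - 1))) r := by
    intro r hr
    have h1 : HasDerivAt (fun r : ℝ => l + r ^ σ) (σ * r ^ (σ - 1)) r :=
      (Real.hasDerivAt_rpow_const (Or.inl hr.ne')).const_add l
    refine (h1.rpow_const (p := -s) (Or.inl (by positivity))).congr_deriv ?_
    rw [← hsd]; ring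
  have hd : 0 < d := by rw [← hsd]; positivity
  have key := CKNineq_radial hp hCKN hx₀ (fun r => (l + r ^ σ) ^ (-s))
    (fun r => -(d * r ^ (σ - 1) * (l + r ^ σ) ^ (-s - 1)))
    (fun r hr t ht hrt => by
      have hr : (0 : ℝ) ≤ r := hr
      have h1 : r ^ σ ≤ t ^ σ := Real.rpow_le_rpow hr hrt hσ.le
      exact Real.rpow_le_rpow_of_nonpos (by positivity) (by linarith) (by linarith))
    hder (fun r hr => by positivity)
    ((tendsto_rpow_neg_atTop hs).comp
      (tendsto_atTop_add_const_left atTop l (tendsto_rpow_atTop hσ)))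
    (fun ε hε => by
      refine ⟨(d * l ^ (-s) / ε).toNNReal, fun r hr => ?_⟩
      have hr : ε ≤ r := hr
      have hr0 : 0 < r := hε.trans_le hr
      have hrσ : 0 < r ^ σ := by positivity
      rw [← NNReal.coe_le_coe, coe_nnnorm, norm_neg, Real.norm_of_nonneg (by positivity),
        Real.coe_toNNReal _ (by positivity)]
      have h1 : (l + r ^ σ) ^ (-s) ≤ l ^ (-s) :=
        Real.rpow_le_rpow_of_nonpos hl (by linarith) (by linarith)
      have h2 : r ^ (σ - 1) / (l + r ^ σ) ≤ 1 / ε := by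
        rw [Real.rpow_sub_one hr0.ne', div_div, div_le_div_iff₀ (by positivity) hε]
        nlinarith
      rw [Real.rpow_sub_one (x := l + r ^ σ) (by positivity)]
      calc d * r ^ (σ - 1) * ((l + r ^ σ) ^ (-s) / (l + r ^ σ))
          = d * (l + r ^ σ) ^ (-s) * (r ^ (σ - 1) / (l + r ^ σ)) := by ring
        _ ≤ d * l ^ (-s) * (1 / ε) := by gcongr
        _ = d * l ^ (-s) / ε := by ring)
  set P := ∫ x, talenti (a * p) σ (1 - N) l (dist x₀ x) ∂μ with hP
  set Q := ∫ x, talenti (a * p) σ (-N) l (dist x₀ x) ∂μ with hQ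
  have hQ0 : 0 ≤ Q := integral_nonneg fun x => talenti_nonneg hl dist_nonneg
  have e1 : ∫⁻ x, ENNReal.ofReal (((l + dist x₀ x ^ σ) ^ (-s)) ^ p / dist x₀ x ^ (a * p)) ∂μ =
      ENNReal.ofReal Q := by
    rw [hQ, ofReal_integral_eq_lintegral_ofReal hintN
      (Eventually.of_forall fun x => talenti_nonneg hl dist_nonneg)]
    apply lintegral_congr
    intro x
    unfold talenti
    rw [← Real.rpow_mul (by positivity), Real.rpow_neg dist_nonneg, neg_mul, hsp]
    congr 1
    rw [div_eq_mul_inv, mul_comm]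
  have hPQ : Integrable (fun x => d ^ 2 * (talenti (a * p) σ (1 - N) l (dist x₀ x) -
      l * talenti (a * p) σ (-N) l (dist x₀ x))) μ :=
    (hint.sub (hintN.const_mul l)).const_mul _
  have hnn : ∀ x, 0 ≤ d ^ 2 * (talenti (a * p) σ (1 - N) l (dist x₀ x) -
      l * talenti (a * p) σ (-N) l (dist x₀ x)) := by
    intro x
    rw [talenti_one_sub hl dist_nonneg]
    have := talenti_nonneg (α := a * p) (σ := σ) (e := -N) hl (dist_nonneg (x := x₀) (y := x))
    have h2 : (0 : ℝ) ≤ dist x₀ x ^ σ := by positivity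
    rw [show ∀ b c : ℝ, (l + b) * c - l * c = b * c by intros; ring]
    positivity
  have eint : ∫ x, d ^ 2 * (talenti (a * p) σ (1 - N) l (dist x₀ x) -
      l * talenti (a * p) σ (-N) l (dist x₀ x)) ∂μ = d ^ 2 * (P - l * Q) := by
    rw [integral_const_mul, integral_sub hint (hintN.const_mul l), integral_const_mul]
  have hR0 : 0 ≤ d ^ 2 * (P - l * Q) := by
    rw [← eint]; exact integral_nonneg hnn
  have e2 : ∫⁻ x, ENNReal.ofReal
      ((-(d * dist x₀ x ^ (σ - 1) * (l + dist x₀ x ^ σ) ^ (-s - 1))) ^ 2) ∂μ =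
      ENNReal.ofReal (d ^ 2 * (P - l * Q)) := by
    rw [← eint, ofReal_integral_eq_lintegral_ofReal hPQ (Eventually.of_forall hnn)]
    apply lintegral_congr_ae
    filter_upwards [hx₀] with x hx
    congr 1
    rw [talenti_one_sub hl dist_nonneg]
    unfold talenti
    have h1 : (dist x₀ x ^ (σ - 1)) ^ 2 = dist x₀ x ^ σ * dist x₀ x ^ (-(a * p)) := by
      rw [← Real.rpow_natCast, ← Real.rpow_mul hx.le, ← Real.rpow_add hx, hα]
      congr 1; push_cast; ring
    have h2 : ((l + dist x₀ x ^ σ) ^ (-s - 1)) ^ 2 = (l + dist x₀ x ^ σ) ^ (-N) := by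
      rw [← Real.rpow_natCast, ← Real.rpow_mul (by positivity), ← hs2]
      congr 1; push_cast; ring
    rw [neg_sq, mul_pow, mul_pow, h1, h2]
    ring
  rw [e1, e2, ENNReal.ofReal_rpow_of_nonneg hQ0 (by positivity),
    ENNReal.ofReal_rpow_of_nonneg hR0 (by positivity), ← ENNReal.ofReal_mul hC.le,
    ENNReal.ofReal_le_ofReal_iff (by positivity)] at key
  have h3 := pow_le_pow_left₀ (by positivity) key 2
  rw [mul_pow, ← Real.rpow_natCast, ← Real.rpow_mul hQ0, ← Real.sqrt_eq_rpow,
    Real.sq_sqrt hR0] at h3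
  calc Q ^ (2 / p) = Q ^ (1 / p * ((2 : ℕ) : ℝ)) := by congr 1; push_cast; ring
    _ ≤ _ := h3
    _ = _ := by ring

/-! ### Ball volumes at small and large scales -/

open Set in
/-- If `V(r) ≥ β r ^ n` for small `r` and `b < β`, then at every sufficiently small scale `κ` the
layer-cake integral of `V` exceeds that of `b r ^ n`: nearly all of the mass `I` of
`w(s) s ^ n ds` lies on a bounded interval, which the scaling by `κ` brings into the range where
`V` is controlled. -/
theorem layer_lower {w : ℝ → ℝ} (hw : Measurable w) {n : ℕ} {I : ℝ} (hI : 0 < I)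
    (hmass : ∫⁻ s in Ioi (0 : ℝ), ENNReal.ofReal (w s) * ENNReal.ofReal (s ^ n) =
      ENNReal.ofReal I)
    (V : ℝ → ENNReal) {b β δ : ℝ} (hb : 0 < b) (hbβ : b < β) (hδ : 0 < δ)
    (hV : ∀ r ∈ Ioc 0 δ, ENNReal.ofReal (β * r ^ n) ≤ V r) :
    ∃ κ₀ > 0, ∀ κ ∈ Ioo 0 κ₀, ENNReal.ofReal (κ ^ n * (b * I)) <
      ∫⁻ s in Ioi (0 : ℝ), ENNReal.ofReal (w s) * V (κ * s) := by
  set h : ℝ → ENNReal := fun s => ENNReal.ofReal (w s) * ENNReal.ofReal (s ^ n) with hh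
  have hm : Measurable h := by fun_prop
  set η : Measure ℝ := (volume.restrict (Ioi (0 : ℝ))).withDensity h with hη
  have hηI : η univ = ENNReal.ofReal I := by
    rw [hη, withDensity_apply _ MeasurableSet.univ, Measure.restrict_univ, hmass]
  have hβ : 0 < β := hb.trans hbβ
  have ht := tendsto_measure_Iic_atTop η
  rw [hηI] at ht
  have hlt : ENNReal.ofReal (b / β * I) < ENNReal.ofReal I := by
    rw [ENNReal.ofReal_lt_ofReal_iff hI]
    have : b / β < 1 := (div_lt_one hβ).2 hbβ
    nlinarith
  obtain ⟨x, hx, hx0⟩ := ((ht.eventually_const_lt hlt).and (eventually_gt_atTop 0)).exists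
  refine ⟨δ / x, by positivity, fun κ hκ => ?_⟩
  have hκ0 : 0 < κ := hκ.1
  have hκx : κ * x ≤ δ := ((lt_div_iff₀ hx0).1 hκ.2).le
  calc ENNReal.ofReal (κ ^ n * (b * I)) = ENNReal.ofReal (κ ^ n * β) *
        ENNReal.ofReal (b / β * I) := by
        rw [← ENNReal.ofReal_mul (by positivity)]
        congr 1; field_simp
    _ < ENNReal.ofReal (κ ^ n * β) * η (Iic x) :=
        ENNReal.mul_lt_mul_right (by simp; positivity) (by simp) hx
    _ = ∫⁻ s in Ioi (0 : ℝ), ENNReal.ofReal (κ ^ n * β) * (Iic x).indicator h s := by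
        rw [lintegral_const_mul _ (hm.indicator measurableSet_Iic),
          lintegral_indicator measurableSet_Iic, hη, withDensity_apply _ measurableSet_Iic]
    _ ≤ _ := by
        refine setLIntegral_mono' measurableSet_Ioi fun s hs => ?_
        have hs : 0 < s := hs
        by_cases hsx : s ∈ Iic x
        · rw [indicator_of_mem hsx, hh]
          simp only
          rw [mul_left_comm, ← ENNReal.ofReal_mul (by positivity)]
          gcongr
          refine le_trans (le_of_eq ?_) (hV (κ * s)
            ⟨by positivity, le_trans (mul_le_mul_of_nonneg_left hsx hκ0.le) hκx⟩)
          congr 1; ring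
        · rw [indicator_of_notMem hsx]; simp

open Set in
/-- If `V(r) ≤ b r ^ n` for large `r`, `V(r) ≤ M r ^ n` for all `r`, and `b < β`, then at some
large scale `κ` the layer-cake integral of `V` is below that of `β r ^ n`. -/
theorem layer_upper {w : ℝ → ℝ} (hw : Measurable w) {n : ℕ} {I : ℝ} (hI : 0 < I)
    (hmass : ∫⁻ s in Ioi (0 : ℝ), ENNReal.ofReal (w s) * ENNReal.ofReal (s ^ n) =
      ENNReal.ofReal I)
    (V : ℝ → ENNReal) {b β M R : ℝ} (hb : 0 ≤ b) (hbβ : b < β) (hM : 0 < M)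
    (hVM : ∀ r, 0 < r → V r ≤ ENNReal.ofReal (M * r ^ n))
    (hV : ∀ r, R < r → V r ≤ ENNReal.ofReal (b * r ^ n)) :
    ∃ κ > 0, ∫⁻ s in Ioi (0 : ℝ), ENNReal.ofReal (w s) * V (κ * s) <
      ENNReal.ofReal (κ ^ n * (β * I)) := by
  set h : ℝ → ENNReal := fun s => ENNReal.ofReal (w s) * ENNReal.ofReal (s ^ n) with hh
  have hm : Measurable h := by fun_prop
  set η : Measure ℝ := (volume.restrict (Ioi (0 : ℝ))).withDensity h with hη
  have hηI : η univ = ENNReal.ofReal I := by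
    rw [hη, withDensity_apply _ MeasurableSet.univ, Measure.restrict_univ, hmass]
  have hη0 : η (Iic 0) = 0 := by
    rw [hη, withDensity_apply _ measurableSet_Iic, Measure.restrict_restrict measurableSet_Iic,
      Iic_inter_Ioi, Ioc_self, Measure.restrict_empty, lintegral_zero_measure]
  have hfin : ∀ s, η s ≠ ⊤ := fun s =>
    ne_top_of_le_ne_top (by rw [hηI]; simp) (measure_mono (subset_univ s))
  have ht : Tendsto (fun k : ℕ => η (Iic (1 / ((k : ℝ) + 1)))) atTop (𝓝 0) := by
    have h1 := tendsto_measure_iInter_atTop (μ := η) (s := fun k : ℕ => Iic (1 / ((k : ℝ) + 1)))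
      (fun k => measurableSet_Iic.nullMeasurableSet)
      (fun i j hij => Iic_subset_Iic.2 (by
        have : (i : ℝ) ≤ j := by exact_mod_cast hij
        exact one_div_le_one_div_of_le (by positivity) (by linarith)))
      ⟨0, hfin _⟩
    have h2 : ⋂ k : ℕ, Iic (1 / ((k : ℝ) + 1)) = Iic 0 := by
      ext x
      simp only [mem_iInter, mem_Iic]
      refine ⟨fun hx => ge_of_tendsto' tendsto_one_div_add_atTop_nhds_zero_nat hx, fun hx k =>
        hx.trans (by positivity)⟩
    rwa [h2, hη0] at h1
  have hpos : (0 : ENNReal) < ENNReal.ofReal ((β - b) * I / M) := by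
    have : 0 < β - b := by linarith
    simp; positivity
  obtain ⟨k, hk⟩ := (ht.eventually_lt_const hpos).exists
  set x : ℝ := 1 / ((k : ℝ) + 1) with hxdef
  have hx0 : 0 < x := by positivity
  set κ := (|R| + 1) / x with hκdef
  have hκ0 : 0 < κ := by positivity
  have hκx : κ * x = |R| + 1 := by rw [hκdef]; field_simp
  refine ⟨κ, hκ0, ?_⟩
  calc ∫⁻ s in Ioi (0 : ℝ), ENNReal.ofReal (w s) * V (κ * s)
      ≤ ∫⁻ s in Ioi (0 : ℝ), (ENNReal.ofReal (κ ^ n * b) * h s +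
          ENNReal.ofReal (κ ^ n * M) * (Iic x).indicator h s) := by
        refine setLIntegral_mono' measurableSet_Ioi fun s hs => ?_
        have hs : 0 < s := hs
        by_cases hsx : s ∈ Iic x
        · rw [indicator_of_mem hsx]
          refine le_trans ?_ le_add_self
          rw [hh]
          simp only
          rw [mul_left_comm, ← ENNReal.ofReal_mul (by positivity)]
          gcongr
          refine (hVM (κ * s) (by positivity)).trans (le_of_eq ?_)
          rw [mul_pow, ← mul_assoc, mul_comm M]
        · refine le_trans ?_ le_self_add
          rw [hh]
          simp only
          rw [mul_left_comm, ← ENNReal.ofReal_mul (by positivity)]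
          gcongr
          have : R < κ * s := by
            have h1 : x < s := not_le.1 hsx
            have h2 : κ * x < κ * s := by gcongr
            have := le_abs_self R
            linarith
          refine (hV (κ * s) this).trans (le_of_eq ?_)
          rw [mul_pow, ← mul_assoc, mul_comm b]
    _ = ENNReal.ofReal (κ ^ n * b) * ENNReal.ofReal I +
          ENNReal.ofReal (κ ^ n * M) * η (Iic x) := by
        rw [lintegral_add_left (by fun_prop), lintegral_const_mul _ hm, hmass,
          lintegral_const_mul _ (hm.indicator measurableSet_Iic),
          lintegral_indicator measurableSet_Iic, hη, withDensity_apply _ measurableSet_Iic]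
    _ < ENNReal.ofReal (κ ^ n * b) * ENNReal.ofReal I +
          ENNReal.ofReal (κ ^ n * M) * ENNReal.ofReal ((β - b) * I / M) := by
        refine ENNReal.add_lt_add_left (ENNReal.mul_ne_top (by simp) (by simp)) ?_
        exact ENNReal.mul_lt_mul_right (by simp; positivity) (by simp) hk
    _ = _ := by
        have : 0 < β - b := by linarith
        rw [← ENNReal.ofReal_mul (by positivity), ← ENNReal.ofReal_mul (by positivity),
          ← ENNReal.ofReal_add (by positivity) (by positivity)]
        congr 1
        field_simp
        ring

open Set in
/-- The integral `P(κ ^ σ)` is, up to a power of `κ`, the layer-cake integral of the volumes of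
balls at scale `κ`. -/
theorem lintegral_talenti {X : Type*} [MetricSpace X] [MeasurableSpace X]
    [BorelSpace X] {μ : Measure X} [SFinite μ] {x₀ : X} (hx₀ : ∀ᵐ x ∂μ, 0 < dist x₀ x)
    {α σ N : ℝ} (hα : 0 ≤ α) (hσ : 0 < σ) (hN : 2 < N) {κ : ℝ} (hκ : 0 < κ) :
    ∫⁻ x, ENNReal.ofReal (talenti α σ (1 - N) (κ ^ σ) (dist x₀ x)) ∂μ =
      ENNReal.ofReal (κ ^ (-α + σ * (1 - N))) *
        ∫⁻ s in Ioi (0 : ℝ), ENNReal.ofReal (profileWeight α σ N s) * μ (ball x₀ (κ * s)) := by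
  have key := lintegral_radial μ (fun x => dist x₀ x / κ) (by fun_prop)
    (by filter_upwards [hx₀] with x hx using by positivity)
    (profile α σ N) (profileWeight α σ N)
    (profileWeight_measurable α σ N) (profileWeight_lintegral hα hσ hN)
  have hset : ∀ s, {x | dist x₀ x / κ < s} = ball x₀ (κ * s) := by
    intro s
    ext x
    rw [mem_ball, dist_comm, mem_ofPred_eq, div_lt_iff₀ hκ, mul_comm]
  simp_rw [hset] at key
  rw [← key, ← lintegral_const_mul]
  · apply lintegral_congr
    intro x
    rw [talenti_scale hκ dist_nonneg, ENNReal.ofReal_mul (by positivity)]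
    rfl
  · have hpm : Measurable (profile α σ N) := by unfold profile; fun_prop
    fun_prop

/-! ### Constants and volume bounds -/

/-- For `b ≤ (K / C) ^ N` the model with constant `b` satisfies the algebraic condition of
`ode_comparison`; equality holds for `b = (K / C) ^ N`. Here `A` is the value of `Q(1)` on the
Euclidean model. -/
theorem sharp_constant_ineq {A K C b N d e : ℝ} (hA : 0 < A) (hC : 0 < C) (hN : 2 < N)
    (hd : 0 < d) (he : d * N / (N - 2) = e) (hb : 0 < b)
    (hK : K = (1 / (d * e)) ^ ((1 : ℝ) / 2) * (A⁻¹) ^ (1 / N)) (hbK : b ≤ (K / C) ^ N) :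
    C ^ 2 * d ^ 2 * (N / (N - 2)) * (b * A) ≤ (b * A) ^ (1 - 2 / N) := by
  have hN2 : 0 < N - 2 := by linarith
  have he0 : 0 < e := by rw [← he]; positivity
  have hK0 : 0 < K := by rw [hK]; positivity
  have hK2 : K ^ 2 = 1 / (d * e) * A ^ (-(2 / N)) := by
    rw [hK, mul_pow, ← Real.sqrt_eq_rpow, Real.sq_sqrt (by positivity), ← Real.rpow_natCast,
      ← Real.rpow_mul (by positivity), Real.inv_rpow hA.le, Real.rpow_neg hA.le]
    congr 3
    push_cast; ring
  have h1 : ((K / C) ^ N) ^ (-(2 / N)) = C ^ 2 / K ^ 2 := by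
    rw [← Real.rpow_mul (by positivity), show N * -(2 / N) = -((2 : ℕ) : ℝ) by
      push_cast; field_simp, Real.rpow_neg (by positivity), Real.rpow_natCast, div_pow, inv_div]
  have h2 : C ^ 2 / K ^ 2 ≤ b ^ (-(2 / N)) := by
    rw [← h1]
    exact Real.rpow_le_rpow_of_nonpos hb hbK (by
      have : 0 < 2 / N := by positivity
      linarith)
  have h3 : C ^ 2 / K ^ 2 * A ^ (-(2 / N)) = C ^ 2 * (d * e) := by
    rw [hK2]
    have : 0 < A ^ (-(2 / N)) := by positivity
    field_simp
  have h4 : C ^ 2 * d ^ 2 * (N / (N - 2)) = C ^ 2 * (d * e) := by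
    rw [← he]; ring
  rw [h4, ← h3, sub_eq_add_neg, Real.rpow_add (by positivity), Real.rpow_one,
    Real.mul_rpow hb.le hA.le, mul_comm (b * A)]
  gcongr

theorem omegaBall_pos (n : ℕ) : 0 < omegaBall n := by
  unfold omegaBall
  have := Real.Gamma_pos_of_pos (show (0 : ℝ) < n / 2 + 1 by positivity)
  positivity

/-- The constant `b A` of the model, with `A` read off from the Gamma factors of `CKNconst`, equals
`(N / 2 - 1) / (N - 1)` times the constant `b ω I` given by the layer-cake integral. -/
theorem gamma_identity {n : ℕ} {σ N b ω : ℝ} (hN : 2 < N) :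
    b * ω * (n / σ * (Real.Gamma (N / 2) * Real.Gamma (N / 2 - 1) / Real.Gamma (N - 1))) *
        ((N / 2 - 1) / (N - 1)) =
      b * (σ * Real.Gamma N / (n * ω * Real.Gamma (N / 2) ^ 2))⁻¹ := by
  have h1 := Real.Gamma_add_one (s := N / 2 - 1) (by linarith)
  have h2 := Real.Gamma_add_one (s := N - 1) (by linarith)
  rw [sub_add_cancel] at h1 h2
  have h3 : Real.Gamma (N / 2 - 1) = Real.Gamma (N / 2) / (N / 2 - 1) := by
    rw [h1, mul_div_cancel_left₀]; linarith
  rw [h2, h3, inv_div]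
  have h4 : N - 2 ≠ 0 := by linarith
  have h5 : N - 1 ≠ 0 := by linarith
  rw [show N / 2 - 1 = (N - 2) / 2 by ring]
  field_simp

section Volume

variable {X : Type*} [MetricSpace X] [MeasurableSpace X] {μ : Measure X} {x₀ : X} {n : ℕ}

theorem volRatio_nonneg (μ : Measure X) (x₀ : X) {r : ℝ} (hr : 0 < r) :
    0 ≤ (μ (ball x₀ r)).toReal / (omegaBall n * r ^ n) := by
  have := omegaBall_pos n
  positivity

theorem ARcond.eventually_lt (hAR : ARcond μ x₀ n) {β : ℝ} (hβ : β < 1) :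
    ∀ᶠ r in 𝓝[>] (0 : ℝ), β < (μ (ball x₀ r)).toReal / (omegaBall n * r ^ n) := by
  unfold ARcond at hAR
  refine eventually_lt_of_lt_liminf (by rw [hAR]; exact hβ) ⟨0, eventually_map.2 ?_⟩
  filter_upwards [self_mem_nhdsWithin] with r hr
  exact volRatio_nonneg μ x₀ hr

/-- A real liminf is a supremum of eventual lower bounds, with junk value `0` if these are
unbounded; since the value here is `1`, they are bounded and `2` is not one of them. -/
theorem ARcond.frequently_lt (hAR : ARcond μ x₀ n) :
    ∃ᶠ r in 𝓝[>] (0 : ℝ), (μ (ball x₀ r)).toReal / (omegaBall n * r ^ n) < 2 := by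
  intro h
  simp only [not_lt] at h
  unfold ARcond at hAR
  rw [liminf_eq] at hAR
  by_cases hbd : BddAbove {a : ℝ | ∀ᶠ r in 𝓝[>] (0 : ℝ),
      a ≤ (μ (ball x₀ r)).toReal / (omegaBall n * r ^ n)}
  · have := le_csSup hbd (Set.mem_ofPred_eq ▸ h : (2 : ℝ) ∈ _)
    linarith
  · rw [Real.sSup_of_not_bddAbove hbd] at hAR
    norm_num at hAR

/-- The density condition gives arbitrarily small `r` with `μ (B(x₀, r)) < 2 ω_n r ^ n`, and the
volume condition transports this bound to every radius. -/
theorem volume_upper {C₀ : ℝ} (hC₀ : 1 ≤ C₀) (hVD : VDcond μ n C₀) (hAR : ARcond μ x₀ n)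
    (hfin : ∀ r, μ (ball x₀ r) ≠ ⊤) {R : ℝ} (hR : 0 < R) :
    μ (ball x₀ R) ≤ ENNReal.ofReal (C₀ * (2 * omegaBall n) * R ^ n) := by
  obtain ⟨r, hr, hr0, hrR⟩ := (hAR.frequently_lt.and_eventually (Ioo_mem_nhdsGT hR)).exists
  have hω := omegaBall_pos n
  have hr0 : 0 < r := hr0
  rw [div_lt_iff₀ (by positivity)] at hr
  calc μ (ball x₀ R) ≤ _ := hVD x₀ r R hr0 hrR
    _ ≤ ENNReal.ofReal (C₀ * (R / r) ^ (n : ℝ)) *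
        ENNReal.ofReal (2 * (omegaBall n * r ^ n)) := by
        gcongr
        exact (ENNReal.le_ofReal_iff_toReal_le (hfin r) (by positivity)).2 hr.le
    _ = _ := by
        rw [← ENNReal.ofReal_mul (by positivity), Real.rpow_natCast, div_pow]
        congr 1
        field_simp

end Volume

/-! ### The volume bound -/

/-- under `(CKN)_C^{x₀}` with `C ≥ K_a`, `(VD)^n_{C₀}` and `(AR)^n_{x₀}` on a
proper metric measure space, `limsup_{r→∞} μ(B(x₀,r))/(ω_n r^n) ≥ (K_a/C)^{n/(1-a)}`. -/
theorem volume_limsup_lower_bound {X : Type*} [MetricSpace X] [ProperSpace X]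
    [MeasurableSpace X] [BorelSpace X] (μ : Measure X)
    (hvol : ∀ U : Set X, IsOpen U → U.Nonempty → Bornology.IsBounded U → 0 < μ U ∧ μ U < ⊤)
    (n : ℕ) (hn : 3 ≤ n) (a p : ℝ) (ha0 : 0 ≤ a) (ha1 : a < 1)
    (hp : p = 2 * n / (n - 2 + 2 * a))
    (x₀ : X) (C C₀ : ℝ) (hC : CKNconst n a p ≤ C) (hC₀ : 1 ≤ C₀)
    (hCKN : CKNineq μ x₀ a p C) (hVD : VDcond μ n C₀) (hAR : ARcond μ x₀ n) :
    (CKNconst n a p / C) ^ ((n : ℝ) / (1 - a)) ≤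
      Filter.limsup (fun r : ℝ => (μ (ball x₀ r)).toReal / (omegaBall n * r ^ n)) atTop := by
  have hn3 : (3 : ℝ) ≤ n := by exact_mod_cast hn
  have hω := omegaBall_pos n
  obtain ⟨d, hd⟩ : ∃ d : ℝ, d = (n : ℝ) - 2 := ⟨_, rfl⟩
  have hd0 : 0 < d := by linarith
  have hq : 0 < (n : ℝ) - 2 + 2 * a := by linarith
  have h1a : 0 < 1 - a := by linarith
  have hp0 : 0 < p := by rw [hp]; positivity
  set σ : ℝ := 2 - a * p with hσdef
  have hσ_eq : σ = 2 * d * (1 - a) / (n - 2 + 2 * a) := by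
    rw [hσdef, hp, hd]; field_simp; ring
  have hσ : 0 < σ := by rw [hσ_eq]; positivity
  set N : ℝ := n / (1 - a) with hNdef
  have hN : 2 < N := by rw [hNdef, lt_div_iff₀ h1a]; linarith
  have hα : 0 ≤ a * p := by positivity
  have hαn : (n : ℝ) - a * p = n * d / (n - 2 + 2 * a) := by
    rw [hp, hd, eq_div_iff hq.ne', sub_mul, mul_assoc a, div_mul_cancel₀ _ hq.ne']; ring
  have hrel : σ * N = 2 * (n - a * p) := by
    rw [hαn, hσ_eq, hNdef]; field_simp
  set s : ℝ := (n - 2 + 2 * a) / (2 * (1 - a)) with hs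
  have hs0 : 0 < s := by positivity
  have hsd : s * σ = d := by rw [hs, hσ_eq]; field_simp
  have hsp : s * p = N := by rw [hs, hp, hNdef]; field_simp
  have hs2 : 2 * s + 2 = N := by rw [hs, hNdef]; field_simp; ring
  have h2p : 2 / p = 1 - 2 / N := by rw [hp, hNdef]; field_simp; ring
  -- the sharp constant in terms of `N`
  set A : ℝ := (σ * Real.Gamma N / (n * omegaBall n * Real.Gamma (N / 2) ^ 2))⁻¹ with hA
  have hΓ : 0 < Real.Gamma N := Real.Gamma_pos_of_pos (by linarith)
  have hΓ2 : 0 < Real.Gamma (N / 2) := Real.Gamma_pos_of_pos (by linarith)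
  have hn0 : (0 : ℝ) < n := by linarith
  have hA0 : 0 < A := by positivity
  have hK : CKNconst n a p = (1 / (d * (n - a * p))) ^ ((1 : ℝ) / 2) * (A⁻¹) ^ (1 / N) := by
    unfold CKNconst
    have e1 : (2 * (n : ℝ) - 2 * a * p) / (2 - a * p) = N := by
      rw [div_eq_iff hσ.ne', mul_comm N, hrel]; ring
    have e2 : ((n : ℝ) - a * p) / (2 - a * p) = N / 2 := by
      rw [div_eq_iff hσ.ne']; linarith
    have e3 : (2 - a * p) / (2 * (n : ℝ) - 2 * a * p) = 1 / N := by
      rw [← e1, one_div_div]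
    rw [e1, e2, e3, ← hd, hA, inv_inv]
  have hαn0 : 0 < (n : ℝ) - a * p := by rw [hαn]; positivity
  have he : d * N / (N - 2) = n - a * p := by
    have : N - 2 = (n - 2 + 2 * a) / (1 - a) := by rw [hNdef]; field_simp; ring
    rw [hαn, this, hNdef]; field_simp
  have hK0 : 0 < CKNconst n a p := by rw [hK]; positivity
  have hC0 : 0 < C := hK0.trans_le hC
  -- regularity of `μ`
  have hfin : ∀ r, μ (ball x₀ r) ≠ ⊤ := by
    intro r
    rcases le_or_gt r 0 with hr | hr
    · rw [ball_eq_empty.2 hr]; simp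
    · exact (hvol _ isOpen_ball ⟨x₀, mem_ball_self hr⟩ isBounded_ball).2.ne
  have : IsFiniteMeasureOnCompacts μ := ⟨fun K hKc => by
    obtain ⟨r, hr⟩ := hKc.isBounded.subset_ball x₀
    exact (measure_mono hr).trans_lt (hfin r).lt_top⟩
  set M : ℝ := C₀ * (2 * omegaBall n) with hM
  have hM0 : 0 < M := by positivity
  have hVM : ∀ r, 0 < r → μ (ball x₀ r) ≤ ENNReal.ofReal (M * r ^ n) :=
    fun r hr => volume_upper hC₀ hVD hAR hfin hr
  have hx₀ : ∀ᵐ x ∂μ, 0 < dist x₀ x := by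
    have h0 : μ {x₀} = 0 := by
      have ht : Tendsto (fun r : ℝ => ENNReal.ofReal (M * r ^ n)) (𝓝[>] 0) (𝓝 0) := by
        have : Tendsto (fun r : ℝ => ENNReal.ofReal (M * r ^ n)) (𝓝 0)
            (𝓝 (ENNReal.ofReal (M * 0 ^ n))) := by
          exact (ENNReal.continuous_ofReal.comp
            (by fun_prop : Continuous fun r : ℝ => M * r ^ n)).tendsto 0
        rw [zero_pow (by omega), mul_zero, ENNReal.ofReal_zero] at this
        exact this.mono_left nhdsWithin_le_nhds
      refine le_antisymm (ge_of_tendsto ht ?_) bot_le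
      filter_upwards [self_mem_nhdsWithin] with r hr
      exact (measure_mono (Set.singleton_subset_iff.2 (mem_ball_self hr))).trans (hVM r hr)
    filter_upwards [compl_mem_ae_iff.2 h0] with x hx
    exact dist_pos.2 (Ne.symm hx)
  -- the layer-cake weight and its total mass
  set w := profileWeight (a * p) σ N with hw
  have hwm : Measurable w := profileWeight_measurable _ _ _
  set I : ℝ := n / σ * (Real.Gamma (N / 2) * Real.Gamma (N / 2 - 1) / Real.Gamma (N - 1)) with hI
  have hI0 : 0 < I := by
    have h1 : 0 < Real.Gamma (N / 2 - 1) := Real.Gamma_pos_of_pos (by linarith)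
    have h2 : 0 < Real.Gamma (N - 1) := Real.Gamma_pos_of_pos (by linarith)
    positivity
  have hmass := lintegral_profile_model hn hα hσ hN hrel
  rw [← hw, ← hI] at hmass
  set J : ℝ → ENNReal := fun κ =>
    ∫⁻ t in Set.Ioi (0 : ℝ), ENNReal.ofReal (w t) * μ (ball x₀ (κ * t)) with hJ
  have hJfin : ∀ κ, 0 < κ → J κ ≠ ⊤ := by
    intro κ hκ
    refine ne_top_of_le_ne_top ?_ (setLIntegral_mono' measurableSet_Ioi
      (g := fun t => ENNReal.ofReal (M * κ ^ n) * (ENNReal.ofReal (w t) * ENNReal.ofReal (t ^ n)))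
      fun t ht => ?_)
    · rw [lintegral_const_mul _ (by fun_prop), hmass]
      exact ENNReal.mul_ne_top (by simp) (by simp)
    · rw [mul_left_comm, ← ENNReal.ofReal_mul (by positivity), mul_assoc M, ← mul_pow]
      gcongr
      exact hVM _ (mul_pos hκ ht)
  set P : ℝ → ℝ := fun l => ∫ x, talenti (a * p) σ (1 - N) l (dist x₀ x) ∂μ with hP
  set Q : ℝ → ℝ := fun l => ∫ x, talenti (a * p) σ (-N) l (dist x₀ x) ∂μ with hQ
  have hlint : ∀ κ, 0 < κ →
      ∫⁻ x, ENNReal.ofReal (talenti (a * p) σ (1 - N) (κ ^ σ) (dist x₀ x)) ∂μ =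
        ENNReal.ofReal (κ ^ (-(a * p) + σ * (1 - N))) * J κ :=
    fun κ hκ => lintegral_talenti hx₀ hα hσ hN hκ
  have hroot : ∀ l : ℝ, 0 < l → (l ^ σ⁻¹) ^ σ = l := fun l hl => Real.rpow_inv_rpow hl.le hσ.ne'
  have hint : ∀ l, 0 < l → Integrable (fun x => talenti (a * p) σ (1 - N) l (dist x₀ x)) μ := by
    intro l hl
    refine (lintegral_ofReal_ne_top_iff_integrable
      ((talenti_measurable _ _ _ _).comp (by fun_prop)).aestronglyMeasurable
      (Eventually.of_forall fun x => talenti_nonneg hl dist_nonneg)).1 ?_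
    have hκ : 0 < l ^ σ⁻¹ := by positivity
    have := hlint _ hκ
    rw [hroot l hl] at this
    change ∫⁻ x, ENNReal.ofReal (talenti (a * p) σ (1 - N) l (dist x₀ x)) ∂μ ≠ ⊤
    rw [this]
    exact ENNReal.mul_ne_top (by simp) (hJfin _ hκ)
  have hPJ : ∀ κ, 0 < κ → P (κ ^ σ) = κ ^ (-(a * p) + σ * (1 - N)) * (J κ).toReal := by
    intro κ hκ
    have h1 := ofReal_integral_eq_lintegral_ofReal (hint (κ ^ σ) (by positivity))
      (Eventually.of_forall fun x => talenti_nonneg (by positivity) dist_nonneg)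
    have h2 : 0 ≤ P (κ ^ σ) := integral_nonneg fun x => talenti_nonneg (by positivity) dist_nonneg
    rw [← ENNReal.toReal_ofReal h2, hP]
    simp only
    rw [h1, hlint κ hκ, ENNReal.toReal_mul, ENNReal.toReal_ofReal (by positivity)]
  -- the scaling exponent of the model
  have hexp : ∀ κ : ℝ, 0 < κ →
      κ ^ (-(a * p) + σ * (1 - N)) * κ ^ n = (κ ^ σ) ^ (1 - N / 2) := by
    intro κ hκ
    rw [← Real.rpow_natCast, ← Real.rpow_add hκ, ← Real.rpow_mul hκ.le]
    congr 1
    linarith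
  have hb1 : (CKNconst n a p / C) ^ N ≤ 1 :=
    Real.rpow_le_one (by positivity) ((div_le_one hC0).2 hC) (by linarith)
  -- suppose `limsup < b₂ < b < (K_a / C) ^ N ≤ 1`; the comparison is run with the constant `b`
  by_contra! hlt
  set v : ℝ → ℝ := fun r => (μ (ball x₀ r)).toReal / (omegaBall n * r ^ n) with hv
  have hvbd : IsBoundedUnder (· ≤ ·) atTop v := by
    refine ⟨M / omegaBall n, eventually_map.2 ?_⟩
    filter_upwards [eventually_gt_atTop 0] with r hr
    have := (ENNReal.le_ofReal_iff_toReal_le (hfin r) (by positivity)).1 (hVM r hr)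
    rw [hv]
    simp only
    rw [div_le_div_iff₀ (by positivity) hω]
    nlinarith
  have hL0 : 0 ≤ limsup v atTop := by
    refine le_limsup_of_frequently_le (Eventually.frequently ?_) hvbd
    filter_upwards [eventually_gt_atTop 0] with r hr using volRatio_nonneg μ x₀ hr
  obtain ⟨b₂, hLb₂, hb₂⟩ := exists_between hlt
  obtain ⟨b, hb₂b, hbK⟩ := exists_between hb₂
  have hb₂0 : 0 ≤ b₂ := hL0.trans hLb₂.le
  have hb0 : 0 < b := hb₂0.trans_lt hb₂b
  obtain ⟨β, hbβ, hβ1⟩ := exists_between (hbK.trans_le hb1)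
  -- near the point the volume is at least `β` times the Euclidean one
  obtain ⟨δ, hδ0, hδ⟩ := mem_nhdsGT_iff_exists_Ioc_subset.1 (hAR.eventually_lt hβ1)
  have hδ0 : 0 < δ := hδ0
  obtain ⟨κ₀, hκ₀, hlow⟩ := layer_lower hwm hI0 hmass (fun r => μ (ball x₀ r))
    (b := b * omegaBall n) (β := β * omegaBall n) (by positivity) (by gcongr) hδ0
    (fun r hr => by
      have h1 : β < (μ (ball x₀ r)).toReal / (omegaBall n * r ^ n) := hδ hr
      have hr0 : 0 < r := hr.1
      rw [lt_div_iff₀ (by positivity)] at h1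
      refine (ENNReal.ofReal_le_iff_le_toReal (hfin r)).2 ?_
      linarith)
  -- far away it is at most `b₂` times the Euclidean one
  obtain ⟨R, hR⟩ := eventually_atTop.1 (eventually_lt_of_limsup_lt hLb₂ hvbd)
  obtain ⟨κ, hκ, hup⟩ := layer_upper (R := max R 0) hwm hI0 hmass (fun r => μ (ball x₀ r))
    (b := b₂ * omegaBall n) (β := b * omegaBall n) (by positivity) (by gcongr) hM0 hVM
    (fun r hr => by
      have hr0 : 0 < r := (le_max_right _ _).trans_lt hr
      have h1 : (μ (ball x₀ r)).toReal / (omegaBall n * r ^ n) < b₂ :=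
        hR r ((le_max_left _ _).trans hr.le)
      rw [div_lt_iff₀ (by positivity)] at h1
      refine (ENNReal.le_ofReal_iff_toReal_le (hfin r) (by positivity)).2 ?_
      linarith)
  have hgam : b * omegaBall n * I * ((N / 2 - 1) / (N - 1)) = b * A := gamma_identity hN
  have hcomp := ode_comparison (N := N) (D := C ^ 2 * d ^ 2) (c := b * omegaBall n * I) hN
    (by positivity) (by positivity) P Q (talenti_integral_hasDerivAt hN hint)
    (fun l hl => by
      rw [← h2p]
      exact CKN_talenti hp0 hC0 hCKN hx₀ hσ hs0 (by rw [hσdef]; ring) hsd hsp hs2 l hl (hint l hl))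
    (by
      rw [hgam]
      exact sharp_constant_ineq hA0 hC0 hN hd0 he hb0 hK hbK.le)
    (by
      filter_upwards [Ioo_mem_nhdsGT (show (0 : ℝ) < κ₀ ^ σ by positivity)] with l hl
      have hl0 : 0 < l := hl.1
      have hκl : 0 < l ^ σ⁻¹ := by positivity
      have h1 := hlow (l ^ σ⁻¹) ⟨hκl, by
        rw [← Real.rpow_rpow_inv (x := κ₀) hκ₀.le hσ.ne']
        exact Real.rpow_lt_rpow hl0.le hl.2 (by positivity)⟩
      have h2 : (l ^ σ⁻¹) ^ n * (b * omegaBall n * I) < (J (l ^ σ⁻¹)).toReal :=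
        (ENNReal.ofReal_lt_iff_lt_toReal (by positivity) (hJfin _ hκl)).1 h1
      have h3 := hPJ _ hκl
      have h4 := hexp _ hκl
      rw [hroot l hl0] at h3 h4
      rw [h3, ← h4]
      calc _ = (l ^ σ⁻¹) ^ (-(a * p) + σ * (1 - N)) *
            ((l ^ σ⁻¹) ^ n * (b * omegaBall n * I)) := by ring
        _ < _ := by gcongr)
    (κ ^ σ) (by positivity)
  have h1 : (J κ).toReal < κ ^ n * (b * omegaBall n * I) :=
    (ENNReal.lt_ofReal_iff_toReal_lt (hJfin κ hκ)).1 hup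
  rw [hPJ κ hκ, ← hexp κ hκ] at hcomp
  have h2 : κ ^ (-(a * p) + σ * (1 - N)) * (J κ).toReal <
      κ ^ (-(a * p) + σ * (1 - N)) * (κ ^ n * (b * omegaBall n * I)) := by gcongr
  linarith
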